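/- arXiv:2105.00413 — 2 statements merged into one kernel-verified Lean document; each statement's English description precedes it below -/
import Mathlib

section
/- If l.n.sp.gldim(R) ≤ k, then for any k' with 0 ≤ k' ≤ k, every (n, k−k')-weak cotorsion right R-module M has injective dimension at most k'. -/
/-!
Common definitions for formalizing "(n,k)-weak cotorsion modules" over an arbitrary
(not necessarily commutative) ring `R`.  Left `R`-modules are objects of
`ModuleCat R`, right `R`-modules are objects of `ModuleCat Rᵐᵒᵖ`.

Since Mathlib does not provide `Tor` of a right module with a left module over a
noncommutative ring, we encode the vanishing of `Tor_i^R(N, M)` (for `N` a right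
module and `M` a left module) by the equivalent condition
`Ext^i_{Rᵐᵒᵖ}(N, M⋆) = 0`, where `M⋆ = Hom_ℤ(M, ℚ/ℤ)` is the character module
(a right module).  This is equivalent because `ℚ/ℤ` is an injective cogenerator:
`Ext^i_{Rᵐᵒᵖ}(N, M⋆) ≅ (Tor_i^R(N, M))⋆`, and an abelian group vanishes iff its
character group does.
-/

open CategoryTheory

universe u

noncomputable section

/-- The character group `Hom_ℤ(N, ℚ/ℤ)`. -/
def CharGroup (N : Type u) [AddCommGroup N] : Type u := N →+ AddCircle (1 : ℚ)

instance (N : Type u) [AddCommGroup N] : AddCommGroup (CharGroup N) :=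
  inferInstanceAs (AddCommGroup (N →+ AddCircle (1 : ℚ)))

namespace CharGroup

variable {N : Type u} [AddCommGroup N]

/-- View an element of the character group as an additive monoid hom. -/
def toHom (f : CharGroup N) : N →+ AddCircle (1 : ℚ) := f

/-- Build an element of the character group from an additive monoid hom. -/
def ofHom (f : N →+ AddCircle (1 : ℚ)) : CharGroup N := f

theorem hom_ext {f g : CharGroup N} (h : ∀ m, toHom f m = toHom g m) : f = g :=
  AddMonoidHom.ext h

end CharGroup

open CharGroup in
/-- Left module structure on the character group of a right module. -/
instance charGroupModuleLeft (R : Type u) [Ring R] (N : Type u) [AddCommGroup N]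
    [Module Rᵐᵒᵖ N] : Module R (CharGroup N) where
  smul r f := ofHom ((toHom f).comp
    (AddMonoidHom.mk' (fun m => MulOpposite.op r • m) (fun a b => smul_add _ a b)))
  one_smul f := hom_ext fun m => by
    show toHom f (MulOpposite.op (1 : R) • m) = toHom f m
    rw [MulOpposite.op_one, one_smul]
  mul_smul r s f := hom_ext fun m => by
    show toHom f (MulOpposite.op (r * s) • m)
      = toHom f (MulOpposite.op s • MulOpposite.op r • m)
    rw [MulOpposite.op_mul, mul_smul]
  smul_zero r := CharGroup.hom_ext fun m => rfl
  smul_add r f g := CharGroup.hom_ext fun m => rfl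
  add_smul r s f := hom_ext fun m => by
    show toHom f (MulOpposite.op (r + s) • m)
      = toHom f (MulOpposite.op r • m) + toHom f (MulOpposite.op s • m)
    rw [MulOpposite.op_add, add_smul, map_add]
  zero_smul f := hom_ext fun m => by
    show toHom f (MulOpposite.op (0 : R) • m) = 0
    rw [MulOpposite.op_zero, zero_smul, map_zero]

open CharGroup in
/-- Right module structure on the character group of a left module. -/
instance charGroupModuleRight (R : Type u) [Ring R] (N : Type u) [AddCommGroup N]
    [Module R N] : Module Rᵐᵒᵖ (CharGroup N) where
  smul r f := ofHom ((toHom f).comp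
    (AddMonoidHom.mk' (fun m => r.unop • m) (fun a b => smul_add _ a b)))
  one_smul f := hom_ext fun m => by
    show toHom f ((1 : Rᵐᵒᵖ).unop • m) = toHom f m
    rw [MulOpposite.unop_one, one_smul]
  mul_smul r s f := hom_ext fun m => by
    show toHom f ((r * s).unop • m) = toHom f (s.unop • r.unop • m)
    rw [MulOpposite.unop_mul, mul_smul]
  smul_zero r := CharGroup.hom_ext fun m => rfl
  smul_add r f g := CharGroup.hom_ext fun m => rfl
  add_smul r s f := hom_ext fun m => by
    show toHom f ((r + s).unop • m) = toHom f (r.unop • m) + toHom f (s.unop • m)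
    rw [MulOpposite.unop_add, add_smul, map_add]
  zero_smul f := hom_ext fun m => by
    show toHom f ((0 : Rᵐᵒᵖ).unop • m) = 0
    rw [MulOpposite.unop_zero, zero_smul, map_zero]

variable (R : Type u) [Ring R]

/-- `extVanish S i A B` says that `Ext^i_S(A, B) = 0`. -/
def extVanish (S : Type u) [Ring S] (i : ℕ) (A B : ModuleCat.{u} S) : Prop :=
  Subsingleton (((Ext ℤ (ModuleCat.{u} S) i).obj (Opposite.op A)).obj B)

/-- The character module of a right `R`-module, as a left `R`-module. -/
def charLeft (N : ModuleCat.{u} Rᵐᵒᵖ) : ModuleCat.{u} R :=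
  ModuleCat.of R (CharGroup N)

/-- The character module of a left `R`-module, as a right `R`-module. -/
def charRight (M : ModuleCat.{u} R) : ModuleCat.{u} Rᵐᵒᵖ :=
  ModuleCat.of Rᵐᵒᵖ (CharGroup M)

/-- `torVanish R i N M` encodes `Tor_i^R(N, M) = 0` for a right module `N` and a
left module `M`, via the character module duality
`Ext^i_R(M, N⋆) ≅ (Tor_i^R(N, M))⋆`. -/
def torVanish (i : ℕ) (N : ModuleCat.{u} Rᵐᵒᵖ) (M : ModuleCat.{u} R) : Prop :=
  extVanish R i M (charLeft R N)

/-- `K` is a special super finitely presented `S`-module (for the parameter `n`):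
`K` is the image of `F_n → F_{n-1}` in a projective resolution
`⋯ → F_{n+1} → F_n → ⋯ → F_0 → U → 0` of some module `U` in which `F_i` is finitely
generated projective for all `i ≥ n`.  (For `n = 0` the distinguished module is `U`
itself, matching `Ext^{n+1}(U, -) ≅ Ext^1(K_{n-1}, -)`.) -/
def IsSpecialSFP (S : Type u) [Ring S] (n : ℕ) (K : ModuleCat.{u} S) : Prop :=
  ∃ (U : ModuleCat.{u} S) (F : ℕ → ModuleCat.{u} S)
    (d : ∀ i, F (i + 1) →ₗ[S] F i) (π : F 0 →ₗ[S] U),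
      (∀ i, Module.Projective S (F i)) ∧
      (∀ i, n ≤ i → Module.Finite S (F i)) ∧
      Function.Surjective π ∧ Function.Exact (d 0) π ∧
      (∀ i, Function.Exact (d (i + 1)) (d i)) ∧
      (if n = 0 then Nonempty ((K : Type u) ≃ₗ[S] U)
       else Nonempty ((K : Type u) ≃ₗ[S] LinearMap.range (d (n - 1))))

/-- The `n`-weak injective dimension of a left `S`-module `M` is at most `k`. -/
def nwidLE (S : Type u) [Ring S] (n k : ℕ) (M : ModuleCat.{u} S) : Prop :=
  ∀ K : ModuleCat.{u} S, IsSpecialSFP S n K → extVanish S (k + 1) K M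

/-- The `n`-weak flat dimension of a right `R`-module `N` is at most `k`:
`Tor_{k+1}^R(N, K) = 0` for every special super finitely presented left module `K`. -/
def nwfdLE (n k : ℕ) (N : ModuleCat.{u} Rᵐᵒᵖ) : Prop :=
  ∀ K : ModuleCat.{u} R, IsSpecialSFP R n K → torVanish R (k + 1) N K

/-- A right `R`-module `M` is `(n,k)`-weak cotorsion if `Ext^1(N, M) = 0` for every
right module `N` of `n`-weak flat dimension at most `k`. -/
def IsNKWeakCotorsion (n k : ℕ) (M : ModuleCat.{u} Rᵐᵒᵖ) : Prop :=
  ∀ N : ModuleCat.{u} Rᵐᵒᵖ, nwfdLE R n k N → extVanish Rᵐᵒᵖ 1 N M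

/-- Projective dimension at most `k`, via Ext vanishing. -/
def pdLE (S : Type u) [Ring S] (k : ℕ) (K : ModuleCat.{u} S) : Prop :=
  ∀ M : ModuleCat.{u} S, extVanish S (k + 1) K M

/-- Injective dimension at most `k`, via Ext vanishing. -/
def idLE (S : Type u) [Ring S] (k : ℕ) (M : ModuleCat.{u} S) : Prop :=
  ∀ N : ModuleCat.{u} S, extVanish S (k + 1) N M

/-- Flat dimension of a right module at most `k`, via Tor vanishing. -/
def fdLE (k : ℕ) (N : ModuleCat.{u} Rᵐᵒᵖ) : Prop :=
  ∀ A : ModuleCat.{u} R, torVanish R (k + 1) N A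

/-- `l.n.sp.gldim(R) ≤ k` : every special super finitely presented left module has
projective dimension at most `k`. -/
def lnspGldimLE (n k : ℕ) : Prop :=
  ∀ K : ModuleCat.{u} R, IsSpecialSFP R n K → pdLE R k K

/-- `w.gl.dim(R) ≤ k`. -/
def wGldimLE (k : ℕ) : Prop :=
  ∀ N : ModuleCat.{u} Rᵐᵒᵖ, fdLE R k N

/-- A right `R`-module `M` is `k`-cotorsion if `Ext^1(F, M) = 0` for every right
module `F` of flat dimension at most `k`. -/
def IsKCotorsion (k : ℕ) (M : ModuleCat.{u} Rᵐᵒᵖ) : Prop :=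
  ∀ F : ModuleCat.{u} Rᵐᵒᵖ, fdLE R k F → extVanish Rᵐᵒᵖ 1 F M

/-- `φ : E → D` is a `𝒞`-precover of `D`. -/
def IsPrecover (S : Type u) [Ring S] (𝒞 : ModuleCat.{u} S → Prop)
    (E D : ModuleCat.{u} S) (φ : E →ₗ[S] D) : Prop :=
  𝒞 E ∧ ∀ F : ModuleCat.{u} S, 𝒞 F → ∀ g : F →ₗ[S] D, ∃ h : F →ₗ[S] E, φ ∘ₗ h = g

/-- `φ : E → D` is a `𝒞`-cover of `D`. -/
def IsCover (S : Type u) [Ring S] (𝒞 : ModuleCat.{u} S → Prop)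
    (E D : ModuleCat.{u} S) (φ : E →ₗ[S] D) : Prop :=
  IsPrecover S 𝒞 E D φ ∧ ∀ g : E →ₗ[S] E, φ ∘ₗ g = φ → Function.Bijective g

/-- `f : X → F` is a `𝒞`-preenvelope of `X`. -/
def IsPreenvelope (S : Type u) [Ring S] (𝒞 : ModuleCat.{u} S → Prop)
    (X F : ModuleCat.{u} S) (f : X →ₗ[S] F) : Prop :=
  𝒞 F ∧ ∀ F' : ModuleCat.{u} S, 𝒞 F' → ∀ g : X →ₗ[S] F', ∃ h : F →ₗ[S] F', h ∘ₗ f = g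

/-- A module is reduced if it has no nonzero injective submodules. -/
def IsReducedModule (S : Type u) [Ring S] (M : ModuleCat.{u} S) : Prop :=
  ∀ N : Submodule S M, Module.Injective S N → N = ⊥

/-- `D` is an `m`-th cosyzygy of `M`: there is an exact sequence
`0 → M → E^0 → ⋯ → E^{m-1} → D → 0` with each `E^i` injective. -/
def IsCosyzygy (S : Type u) [Ring S] : ℕ → ModuleCat.{u} S → ModuleCat.{u} S → Prop
  | 0, M, D => Nonempty ((M : Type u) ≃ₗ[S] D)
  | m + 1, M, D => ∃ (C E : ModuleCat.{u} S), IsCosyzygy S m M C ∧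
      Module.Injective S E ∧
      ∃ (ι : C →ₗ[S] E) (p : E →ₗ[S] D),
        Function.Injective ι ∧ Function.Surjective p ∧ Function.Exact ι p


/-- A left `R`-module `F` is flat: `Tor_1(A, F) = 0` for every right module `A`
(encoded via character duality, as above). -/
def IsFlatModule (R : Type u) [Ring R] (F : ModuleCat.{u} R) : Prop :=
  ∀ A : ModuleCat.{u} Rᵐᵒᵖ, torVanish R 1 A F

end

/-!
Every right module `N` has `n`-weak flat dimension at most `k`,
because `Tor_{k+1}(N, K)` is dual to `Ext^{k+1}(K, N⋆)`, which vanishes when `K` has projective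
dimension at most `k`. Passing to the kernel `L` of a projective presentation of `N` lowers the
`n`-weak flat dimension by one and gives `Ext^{i+1}(N, M) ≅ Ext^i(L, M)` for `i ≥ 1`, so after `k'`
such steps `Ext^{k'+1}(N, M)` becomes an `Ext^1` which the weak cotorsion hypothesis kills.
-/

section Ext

variable {C : Type*} [Category* C] [Abelian C]

section Comparison

variable {k : Type*} [Ring k] [Linear k C] [EnoughProjectives C]

theorem isZero_Ext_succ_iff_forall_exists {A : C} (P : ProjectiveResolution A) (B : C) (i : ℕ) :
    Limits.IsZero (((Ext k C (i + 1)).obj (Opposite.op A)).obj B) ↔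
      ∀ f : P.complex.X (i + 1) ⟶ B, P.complex.d (i + 2) (i + 1) ≫ f = 0 →
        ∃ g : P.complex.X i ⟶ B, P.complex.d (i + 1) i ≫ g = f := by
  rw [(P.isoExt (i + 1) B).isZero_iff, ← HomologicalComplex.exactAt_iff_isZero_homology,
    HomologicalComplex.exactAt_iff' _ i (i + 1) (i + 2) (by simp) (by simp),
    ShortComplex.moduleCat_exact_iff]
  exact Iff.rfl

/-- `Ext` is defined by deriving `Hom` in its first argument, whereas the long exact sequences in
either argument are available for the derived-category groups `Abelian.Ext`. -/
theorem isZero_Ext_succ_iff_subsingleton [HasExt C] (A B : C) (i : ℕ) :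
    Limits.IsZero (((Ext k C (i + 1)).obj (Opposite.op A)).obj B) ↔
      Subsingleton (Abelian.Ext A B (i + 1)) := by
  let P := projectiveResolution A
  rw [isZero_Ext_succ_iff_forall_exists P]
  constructor
  · intro h
    refine subsingleton_of_forall_eq 0 fun α => ?_
    obtain ⟨f, hf, rfl⟩ := P.extMk_surjective α (i + 2) rfl
    exact (P.extMk_eq_zero_iff f _ rfl hf i rfl).2 (h f hf)
  · intro h f hf
    exact (P.extMk_eq_zero_iff f (i + 2) rfl hf i rfl).1 (Subsingleton.elim _ _)

end Comparison

section LongExactSequence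

variable [HasExt C] {S : ShortComplex C} {n : ℕ}

theorem subsingleton_ext_to_X₃ (hS : S.ShortExact) (A : C)
    (h₁ : Subsingleton (Abelian.Ext A S.X₁ (n + 1))) (h₂ : Subsingleton (Abelian.Ext A S.X₂ n)) :
    Subsingleton (Abelian.Ext A S.X₃ n) := by
  refine subsingleton_of_forall_eq 0 fun x => ?_
  obtain ⟨y, rfl⟩ := Abelian.Ext.covariant_sequence_exact₃ A hS x rfl (Subsingleton.elim _ _)
  rw [Subsingleton.elim y 0, Abelian.Ext.zero_comp]

theorem subsingleton_ext_from_X₃ (hS : S.ShortExact) (B : C)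
    (h₁ : Subsingleton (Abelian.Ext S.X₁ B n)) (h₂ : Subsingleton (Abelian.Ext S.X₂ B (n + 1))) :
    Subsingleton (Abelian.Ext S.X₃ B (n + 1)) := by
  refine subsingleton_of_forall_eq 0 fun x => ?_
  obtain ⟨y, rfl⟩ := Abelian.Ext.contravariant_sequence_exact₃ hS B x (Subsingleton.elim _ _)
    (add_comm 1 n)
  rw [Subsingleton.elim y 0, Abelian.Ext.comp_zero]

end LongExactSequence

end Ext

theorem extVanish_succ_iff_subsingleton {S : Type u} [Ring S] {i : ℕ} {A B : ModuleCat.{u} S} :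
    extVanish S (i + 1) A B ↔ Subsingleton (Abelian.Ext.{u} A B (i + 1)) := by
  rw [extVanish, ← ModuleCat.isZero_iff_subsingleton, isZero_Ext_succ_iff_subsingleton]

namespace CharGroup

section Dual

variable {A B C : Type u} [AddCommGroup A] [AddCommGroup B] [AddCommGroup C]

/-- The additive map `f⋆ : B⋆ → A⋆`, `φ ↦ φ ∘ f`, on character groups. -/
def dual (f : A →+ B) : CharGroup B →+ CharGroup A where
  toFun φ := ofHom ((toHom φ).comp f)
  map_zero' := rfl
  map_add' _ _ := rfl

theorem dual_injective_of_surjective {f : A →+ B} (hf : Function.Surjective f) :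
    Function.Injective (dual f) :=
  CharacterModule.dual_injective_of_surjective f.toIntLinearMap hf

theorem dual_surjective_of_injective {f : A →+ B} (hf : Function.Injective f) :
    Function.Surjective (dual f) :=
  CharacterModule.dual_surjective_of_injective f.toIntLinearMap hf

theorem dual_exact {f : A →+ B} {g : B →+ C} (hfg : Function.Exact f g) :
    Function.Exact (dual g) (dual f) := by
  intro φ
  constructor
  · intro hφ
    have ker_le : g.rangeRestrict.ker ≤ (toHom φ).ker := by
      intro b hb
      obtain ⟨a, rfl⟩ := (hfg b).1 (congrArg Subtype.val hb)
      exact DFunLike.congr_fun (congrArg toHom hφ) a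
    let φ' : CharGroup g.range :=
      ofHom (g.rangeRestrict.liftOfSurjective g.rangeRestrict_surjective ⟨toHom φ, ker_le⟩)
    obtain ⟨ψ, hψ⟩ := dual_surjective_of_injective g.range.subtype_injective φ'
    refine ⟨ψ, hom_ext fun b => ?_⟩
    calc toHom ψ (g b) = toHom φ' (g.rangeRestrict b) :=
          DFunLike.congr_fun (congrArg toHom hψ) (g.rangeRestrict b)
      _ = toHom φ b := AddMonoidHom.liftOfRightInverse_comp_apply _ _ _ ⟨toHom φ, ker_le⟩ b
  · rintro ⟨ψ, rfl⟩
    refine hom_ext fun a => ?_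
    change toHom ψ (g (f a)) = 0
    rw [hfg.apply_apply_eq_zero, map_zero]

end Dual

section Linear

variable {R : Type u} [Ring R]

/-- The dual of a map of right modules, as a map of left modules. -/
def dualLeft {A B : Type u} [AddCommGroup A] [AddCommGroup B] [Module Rᵐᵒᵖ A] [Module Rᵐᵒᵖ B]
    (f : A →ₗ[Rᵐᵒᵖ] B) : CharGroup B →ₗ[R] CharGroup A where
  __ := dual f.toAddMonoidHom
  map_smul' r φ := hom_ext fun a => congrArg (toHom φ) (f.map_smul (MulOpposite.op r) a).symm

/-- The dual of a map of left modules, as a map of right modules. -/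
def dualRight {A B : Type u} [AddCommGroup A] [AddCommGroup B] [Module R A] [Module R B]
    (f : A →ₗ[R] B) : CharGroup B →ₗ[Rᵐᵒᵖ] CharGroup A where
  __ := dual f.toAddMonoidHom
  map_smul' r φ := hom_ext fun a => congrArg (toHom φ) (f.map_smul r.unop a).symm

variable {X P : Type u} [AddCommGroup X] [Module R X] [AddCommGroup P] [Module Rᵐᵒᵖ P]

/-- The map `P → X⋆` obtained from `g : X → P⋆` by exchanging the two arguments of the pairing
`X × P → ℚ/ℤ`. -/
def flipRight (g : X →ₗ[R] CharGroup P) : P →ₗ[Rᵐᵒᵖ] CharGroup X where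
  toFun p := ofHom (AddMonoidHom.mk' (fun x => toHom (g x) p) fun x y =>
    congrArg (fun φ => toHom φ p) (g.map_add x y))
  map_add' p q := hom_ext fun x => map_add (toHom (g x)) p q
  map_smul' r p := hom_ext fun x =>
    congrArg (fun φ => toHom φ p) (g.map_smul r.unop x).symm

/-- The map `X → P⋆` obtained from `h : P → X⋆` by exchanging the two arguments of the pairing
`P × X → ℚ/ℤ`. -/
def flipLeft (h : P →ₗ[Rᵐᵒᵖ] CharGroup X) : X →ₗ[R] CharGroup P where
  toFun x := ofHom (AddMonoidHom.mk' (fun p => toHom (h p) x) fun p q =>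
    congrArg (fun φ => toHom φ x) (h.map_add p q))
  map_add' x y := hom_ext fun p => map_add (toHom (h p)) x y
  map_smul' r x := hom_ext fun p =>
    congrArg (fun φ => toHom φ x) (h.map_smul (MulOpposite.op r) p).symm

/-- Under `Hom_R(X, P⋆) ≅ Hom_{Rᵐᵒᵖ}(P, X⋆)`, extending a map along an injection `X → Y` becomes
lifting a map along the surjection `Y⋆ → X⋆`. -/
theorem injective_of_projective [Module.Projective Rᵐᵒᵖ P] :
    Module.Injective R (CharGroup P) where
  out X Y _ _ _ _ f hf g := by
    obtain ⟨h, hh⟩ := Module.projective_lifting_property (dualRight f) (flipRight g)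
      (dual_surjective_of_injective hf)
    exact ⟨flipLeft h, fun x => hom_ext fun p =>
      DFunLike.congr_fun (congrArg toHom (LinearMap.congr_fun hh p)) x⟩

end Linear

end CharGroup

section Tor

variable {R : Type u} [Ring R]

/-- The short complex of left modules `X₃⋆ → X₂⋆ → X₁⋆` dual to a short complex
`X₁ → X₂ → X₃` of right modules. -/
def charLeftShortComplex (S : ShortComplex (ModuleCat.{u} Rᵐᵒᵖ)) :
    ShortComplex (ModuleCat.{u} R) where
  X₁ := charLeft R S.X₃
  X₂ := charLeft R S.X₂
  X₃ := charLeft R S.X₁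
  f := ModuleCat.ofHom (CharGroup.dualLeft S.g.hom)
  g := ModuleCat.ofHom (CharGroup.dualLeft S.f.hom)
  zero := by
    ext φ
    refine CharGroup.hom_ext fun x => ?_
    change CharGroup.toHom φ (S.g (S.f x)) = 0
    rw [S.moduleCat_zero_apply, map_zero]

theorem charLeftShortComplex_shortExact {S : ShortComplex (ModuleCat.{u} Rᵐᵒᵖ)}
    (hS : S.ShortExact) : (charLeftShortComplex S).ShortExact :=
  ModuleCat.shortComplex_shortExact _
    (CharGroup.dual_exact
      ((ShortComplex.ShortExact.moduleCat_exact_iff_function_exact S).1 hS.exact))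
    (CharGroup.dual_injective_of_surjective hS.moduleCat_surjective_g)
    (CharGroup.dual_surjective_of_injective hS.moduleCat_injective_f)

theorem torVanish_succ_of_projective (P : ModuleCat.{u} Rᵐᵒᵖ) [Projective P]
    (K : ModuleCat.{u} R) (i : ℕ) : torVanish R (i + 1) P K := by
  have : Module.Projective Rᵐᵒᵖ P := (IsProjective.iff_projective _).2 ‹_›
  have : Injective (charLeft R P) :=
    (Module.injective_iff_injective_object R _).1 CharGroup.injective_of_projective
  exact extVanish_succ_iff_subsingleton.2 (Abelian.Ext.subsingleton_of_injective K _ i)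

theorem torVanish_succ_X₁ {S : ShortComplex (ModuleCat.{u} Rᵐᵒᵖ)} (hS : S.ShortExact)
    {K : ModuleCat.{u} R} {i : ℕ} (h₂ : torVanish R (i + 1) S.X₂ K)
    (h₃ : torVanish R (i + 2) S.X₃ K) : torVanish R (i + 1) S.X₁ K := by
  rw [torVanish, extVanish_succ_iff_subsingleton] at h₂ h₃ ⊢
  exact subsingleton_ext_to_X₃ (charLeftShortComplex_shortExact hS) K h₃ h₂

theorem nwfdLE_X₁_of_projective {S : ShortComplex (ModuleCat.{u} Rᵐᵒᵖ)} (hS : S.ShortExact)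
    [Projective S.X₂] {n j : ℕ} (h : nwfdLE R n (j + 1) S.X₃) : nwfdLE R n j S.X₁ :=
  fun K hK => torVanish_succ_X₁ hS (torVanish_succ_of_projective S.X₂ K j) (h K hK)

end Tor

theorem extVanish_X₃_of_projective {R : Type u} [Ring R] {S : ShortComplex (ModuleCat.{u} R)}
    (hS : S.ShortExact) [Projective S.X₂] {B : ModuleCat.{u} R} {i : ℕ}
    (h : extVanish R (i + 1) S.X₁ B) : extVanish R (i + 2) S.X₃ B := by
  rw [extVanish_succ_iff_subsingleton] at h ⊢
  exact subsingleton_ext_from_X₃ hS B h (Abelian.Ext.subsingleton_of_projective S.X₂ B (i + 1))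

theorem IsNKWeakCotorsion.extVanish_succ {R : Type u} [Ring R] {n j : ℕ}
    {M : ModuleCat.{u} Rᵐᵒᵖ} (hM : IsNKWeakCotorsion R n j M) (i : ℕ) {N : ModuleCat.{u} Rᵐᵒᵖ}
    (hN : nwfdLE R n (j + i) N) : extVanish Rᵐᵒᵖ (i + 1) N M := by
  induction i generalizing N with
  | zero => exact hM N hN
  | succ i ih =>
    have hS := N.shortExact_projectiveShortComplex
    have : Projective N.projectiveShortComplex.X₂ :=
      (IsProjective.iff_projective _).1 inferInstance
    exact extVanish_X₃_of_projective hS (ih (nwfdLE_X₁_of_projective hS hN))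

/-- if `l.n.sp.gldim(R) ≤ k` then for `0 ≤ k' ≤ k` every
`(n, k−k')`-weak cotorsion right module has injective dimension at most `k'`. -/
theorem stmt17 (R : Type u) [Ring R] (n k : ℕ) (h : lnspGldimLE R n k)
    (k' : ℕ) (hk' : k' ≤ k) (M : ModuleCat.{u} Rᵐᵒᵖ)
    (hM : IsNKWeakCotorsion R n (k - k') M) :
    idLE Rᵐᵒᵖ k' M := by
  intro N
  have hN : nwfdLE R n k N := fun K hK => h K hK (charLeft R N)
  rw [← Nat.sub_add_cancel hk'] at hN
  exact hM.extVanish_succ k' hN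
end

section
/- For any ring R and any non-negative integer n, l.n.sp.gldim(R) ≤ w.gl.dim(R). -/
/-!
Common definitions for formalizing "(n,k)-weak cotorsion modules" over an arbitrary
(not necessarily commutative) ring `R`.  Left `R`-modules are objects of
`ModuleCat R`, right `R`-modules are objects of `ModuleCat Rᵐᵒᵖ`.

Since Mathlib does not provide `Tor` of a right module with a left module over a
noncommutative ring, we encode the vanishing of `Tor_i^R(N, M)` (for `N` a right
module and `M` a left module) by the equivalent condition
`Ext^i_{Rᵐᵒᵖ}(N, M⋆) = 0`, where `M⋆ = Hom_ℤ(M, ℚ/ℤ)` is the character module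
(a right module).  This is equivalent because `ℚ/ℤ` is an injective cogenerator:
`Ext^i_{Rᵐᵒᵖ}(N, M⋆) ≅ (Tor_i^R(N, M))⋆`, and an abelian group vanishes iff its
character group does.
-/

open CategoryTheory

universe u

/-!
Evaluation embeds a module `M` into its double character module `M⋆⋆` as a pure submodule: a
character of `Mᵖ` that kills every right-hand side of a linear system solvable in `M` also kills
the ones solvable in `M⋆⋆`, and characters separate the points of an abelian group.  A pure map
`M → N` lets one descend factorisations through homomorphisms of finitely generated projective
modules, so if `K` has a resolution by such modules then `Extⁱ(K, N) = 0` implies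
`Extⁱ(K, M) = 0` for `i ≥ 1`.  Applied to `N = M⋆⋆`, the vanishing of `Torᵢ(M⋆, K)` forces
`Extⁱ(K, M) = 0`.
-/

section Resolution

open Limits

universe v w

variable {C : Type w} [Category.{v} C] [Abelian C] {K : C}

/-- The projective resolution of `K` given by a chain complex `X` of projective objects and an
augmentation `π : X 0 ⟶ K` for which `⋯ → X 1 → X 0 → K → 0` is exact. -/
noncomputable def projectiveResolutionOfExact (X : ChainComplex C ℕ) [∀ i, Projective (X.X i)]
    (π : X.X 0 ⟶ K) [Epi π] (w : X.d 1 0 ≫ π = 0) (exact_zero : (ShortComplex.mk _ _ w).Exact)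
    (exactAt_succ : ∀ i, X.ExactAt (i + 1)) : ProjectiveResolution K where
  complex := X
  π := (X.toSingle₀Equiv K).symm ⟨π, w⟩
  quasiIso := ⟨fun i => by
    cases i with
    | zero =>
      rw [ChainComplex.quasiIsoAt₀_iff,
        ShortComplex.quasiIso_iff_of_zeros' _ (X.shape _ _ (by simp)) rfl rfl]
      have π_zero : ((X.toSingle₀Equiv K).symm ⟨π, w⟩).f 0 = π :=
        ChainComplex.toSingle₀Equiv_symm_apply_f_zero π w
      refine (ShortComplex.exact_and_epi_g_iff_of_iso ?_).2 ⟨exact_zero, ‹Epi π›⟩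
      exact ShortComplex.isoMk (Iso.refl (X.X 1)) (Iso.refl (X.X 0)) (Iso.refl K)
        ((Category.id_comp _).trans (Category.comp_id _).symm)
        ((Category.id_comp π).trans (π_zero.symm.trans (Category.comp_id _).symm))
    | succ i =>
      rw [quasiIsoAt_iff_exactAt' _ _ (ChainComplex.exactAt_succ_single_obj _ _)]
      exact exactAt_succ i⟩

theorem isZero_Ext_succ_iff {A : Type*} [Ring A] [Linear A C] [EnoughProjectives C]
    (P : ProjectiveResolution K) (k : ℕ) (Y : C) :
    IsZero (((Ext A C (k + 1)).obj (Opposite.op K)).obj Y) ↔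
      ∀ f : P.complex.X (k + 1) ⟶ Y, P.complex.d (k + 2) (k + 1) ≫ f = 0 →
        ∃ g : P.complex.X k ⟶ Y, P.complex.d (k + 1) k ≫ g = f := by
  rw [(P.isoExt (k + 1) Y).isZero_iff, ← HomologicalComplex.exactAt_iff_isZero_homology,
    HomologicalComplex.exactAt_iff' _ k (k + 1) (k + 2) (by simp) (by simp),
    ShortComplex.moduleCat_exact_iff]
  rfl

end Resolution

variable {S : Type u} [Ring S]

theorem exactAt_succ_iff_function_exact (X : ChainComplex (ModuleCat.{u} S) ℕ) (i : ℕ) :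
    X.ExactAt (i + 1) ↔ Function.Exact (X.d (i + 2) (i + 1)) (X.d (i + 1) i) := by
  rw [HomologicalComplex.exactAt_iff' _ (i + 2) (i + 1) i (by simp) (by simp),
    ShortComplex.ShortExact.moduleCat_exact_iff_function_exact]
  rfl

namespace IsSpecialSFP

variable {n : ℕ} {K : ModuleCat.{u} S}

theorem zero (h : IsSpecialSFP S n K) : IsSpecialSFP S 0 K := by
  obtain ⟨U, F, d, π, projective, finite, π_surj, exact_zero, exact_succ, hK⟩ := h
  cases n with
  | zero => exact ⟨U, F, d, π, projective, finite, π_surj, exact_zero, exact_succ, hK⟩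
  | succ m =>
    refine ⟨ModuleCat.of S (LinearMap.range (d m)), fun i => F (m + 1 + i),
      fun i => d (m + 1 + i), (d m).rangeRestrict, fun i => projective _,
      fun i _ => finite _ (by lia), (d m).surjective_rangeRestrict, ?_, fun i => exact_succ _,
      hK⟩
    intro x
    exact Subtype.ext_iff.trans (exact_succ m x)

theorem exists_projectiveResolution (h : IsSpecialSFP S n K) :
    ∃ P : ProjectiveResolution K, ∀ i, Module.Finite S (P.complex.X i) := by
  obtain ⟨U, F, d, π, projective, finite, π_surj, exact_zero, exact_succ, ⟨e⟩⟩ := h.zero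
  have _ (i : ℕ) : Projective (F i) := (IsProjective.iff_projective (F i)).1 (projective i)
  let ρ : F 0 →ₗ[S] K := e.symm.toLinearMap ∘ₗ π
  have : Epi (ModuleCat.ofHom ρ) :=
    (ModuleCat.epi_iff_surjective _).2 (e.symm.surjective.comp π_surj)
  let X : ChainComplex (ModuleCat.{u} S) ℕ := ChainComplex.of F (fun i => ModuleCat.ofHom (d i))
    fun i => ModuleCat.hom_ext (exact_succ i).linearMap_comp_eq_zero
  have X_d (i : ℕ) : X.d (i + 1) i = ModuleCat.ofHom (d i) :=
    ChainComplex.of_d F (fun i => ModuleCat.ofHom (d i)) i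
  have exact_ρ : Function.Exact (X.d 1 0).hom ρ := by
    intro x
    simpa [X_d, ρ] using exact_zero x
  refine ⟨projectiveResolutionOfExact X (ModuleCat.ofHom ρ)
    (ModuleCat.hom_ext exact_ρ.linearMap_comp_eq_zero)
    ((ShortComplex.ShortExact.moduleCat_exact_iff_function_exact _).2 exact_ρ) fun i => ?_,
    fun i => finite i (Nat.zero_le i)⟩
  rw [exactAt_succ_iff_function_exact, X_d, X_d]
  exact exact_succ i

end IsSpecialSFP

section Pure

variable {M N : Type*} [AddCommGroup M] [Module S M] [AddCommGroup N] [Module S N]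

/-- A homomorphism `φ : M → N` is pure if every finite system of linear equations over `M` whose
image under `φ` is solvable in `N` is already solvable in `M`.  Systems without unknowns make `φ`
injective. -/
def IsPureHom (φ : M →ₗ[S] N) : Prop :=
  ∀ (p q : ℕ) (a : Matrix (Fin p) (Fin q) S) (m : Fin p → M) (y : Fin q → N),
    (∀ i, ∑ j, a i j • y j = φ (m i)) → ∃ x : Fin q → M, ∀ i, ∑ j, a i j • x j = m i

theorem IsPureHom.exists_comp_eq {P Q : Type*} [AddCommGroup P] [Module S P] [Module.Finite S P]
    [AddCommGroup Q] [Module S Q] [Module.Finite S Q] [Module.Projective S Q]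
    {φ : M →ₗ[S] N} (hφ : IsPureHom φ) (d : P →ₗ[S] Q) (f : P →ₗ[S] M) (g : Q →ₗ[S] N)
    (comm : g ∘ₗ d = φ ∘ₗ f) : ∃ g' : Q →ₗ[S] M, g' ∘ₗ d = f := by
  obtain ⟨p, ε, ε_surj⟩ := Module.Finite.exists_fin' S P
  obtain ⟨q, r, s, -, -, r_comp_s⟩ := Module.Finite.exists_comp_eq_id_of_projective S Q
  let a : Matrix (Fin p) (Fin q) S := fun i => s (d (ε (Pi.single i 1)))
  have hy (i : Fin p) :
      ∑ j, a i j • g (r (Pi.single j 1)) = φ (f (ε (Pi.single i 1))) := by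
    calc ∑ j, a i j • g (r (Pi.single j 1))
        = g (r (a i)) := by
          conv_rhs => rw [pi_eq_sum_univ' (a i)]
          simp only [map_sum, map_smul]
      _ = g (d (ε (Pi.single i 1))) := congrArg g (LinearMap.congr_fun r_comp_s _)
      _ = φ (f (ε (Pi.single i 1))) := LinearMap.congr_fun comm _
  obtain ⟨x, hx⟩ := hφ p q a (fun i => f (ε (Pi.single i 1))) _ hy
  refine ⟨Fintype.linearCombination S x ∘ₗ s, ?_⟩
  rw [← LinearMap.cancel_right ε_surj]
  ext i
  simpa [Fintype.linearCombination_apply] using hx i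

end Pure

theorem extVanish_succ_of_isPureHom {K M N : ModuleCat.{u} S} (P : ProjectiveResolution K)
    {k : ℕ} [Module.Finite S (P.complex.X k)] [Module.Finite S (P.complex.X (k + 1))]
    {φ : M →ₗ[S] N} (hφ : IsPureHom φ) (h : extVanish S (k + 1) K N) :
    extVanish S (k + 1) K M := by
  rw [extVanish, ← ModuleCat.isZero_iff_subsingleton, isZero_Ext_succ_iff P] at h ⊢
  intro f hf
  obtain ⟨g, hg⟩ := h (f ≫ ModuleCat.ofHom φ) (by rw [reassoc_of% hf, Limits.zero_comp])
  have : Module.Projective S (P.complex.X k) :=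
    (IsProjective.iff_projective _).2 (P.projective k)
  obtain ⟨g', hg'⟩ := hφ.exists_comp_eq (P.complex.d (k + 1) k).hom f.hom g.hom
    (congrArg ModuleCat.Hom.hom hg)
  exact ⟨ModuleCat.ofHom g', ModuleCat.hom_ext hg'⟩

theorem mem_addSubgroup_of_forall_character {A : Type*} [AddCommGroup A] {H : AddSubgroup A}
    {a : A} (h : ∀ χ : A →+ AddCircle (1 : ℚ), (∀ b ∈ H, χ b = 0) → χ a = 0) : a ∈ H := by
  rw [← QuotientAddGroup.eq_zero_iff]
  refine CharacterModule.eq_zero_of_character_apply fun ψ : A ⧸ H →+ AddCircle (1 : ℚ) => ?_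
  refine h (ψ.comp (QuotientAddGroup.mk' H)) fun b hb => ?_
  simp [(QuotientAddGroup.eq_zero_iff b).2 hb]

namespace CharGroup

theorem toHom_sum {N : Type u} [AddCommGroup N] {ι : Type*} (s : Finset ι) (c : ι → CharGroup N)
    (x : N) : toHom (∑ i ∈ s, c i) x = ∑ i ∈ s, toHom (c i) x :=
  map_sum (AddMonoidHom.eval x) c s

variable (M : Type u) [AddCommGroup M] [Module S M]

variable (S) in
/-- The evaluation homomorphism `M → M⋆⋆` from a left module to its double character module. -/
def eval : M →ₗ[S] CharGroup (CharGroup M) where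
  toFun m := ofHom (AddMonoidHom.eval m)
  map_add' a b := hom_ext fun c => map_add (toHom c) a b
  map_smul' _ _ := rfl

theorem isPureHom_eval : IsPureHom (eval S M) := by
  intro p q a m y hy
  let T : (Fin q → M) →+ (Fin p → M) :=
    AddMonoidHom.mk' (fun x i => ∑ j, a i j • x j) fun x x' => by
      ext i; simp [Finset.sum_add_distrib]
  suffices m ∈ T.range from this.imp fun x hx => congrFun hx
  refine mem_addSubgroup_of_forall_character fun χ hχ => ?_
  let c (i : Fin p) : CharGroup M := ofHom (χ.comp (AddMonoidHom.single (fun _ => M) i))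
  have χ_apply (v : Fin p → M) : χ v = ∑ i, toHom (c i) (v i) := by
    conv_lhs => rw [← Finset.univ_sum_single v, map_sum]
    rfl
  have relation (j : Fin q) : ∑ i, MulOpposite.op (a i j) • c i = 0 := by
    refine hom_ext fun x => ?_
    calc toHom (∑ i, MulOpposite.op (a i j) • c i) x
        = ∑ i, toHom (c i) (a i j • x) := toHom_sum _ _ _
      _ = χ (T (Pi.single j x)) := by simp [χ_apply, T, Pi.single_apply]
      _ = 0 := hχ _ ⟨_, rfl⟩
  calc χ m
      = ∑ i, toHom (eval S M (m i)) (c i) := χ_apply m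
    _ = ∑ i, ∑ j, toHom (y j) (MulOpposite.op (a i j) • c i) := by
      simp only [← hy, toHom_sum]; rfl
    _ = ∑ j, toHom (y j) (∑ i, MulOpposite.op (a i j) • c i) := by
      simp only [map_sum]; exact Finset.sum_comm
    _ = 0 := by simp only [relation, map_zero, Finset.sum_const_zero]

end CharGroup

theorem IsSpecialSFP.extVanish_of_torVanish {n k : ℕ} {K M : ModuleCat.{u} S}
    (hK : IsSpecialSFP S n K) (h : torVanish S (k + 1) (charRight S M) K) :
    extVanish S (k + 1) K M := by
  obtain ⟨P, hP⟩ := hK.exists_projectiveResolution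
  exact extVanish_succ_of_isPureHom P (CharGroup.isPureHom_eval M) h

theorem stmt19_general (R : Type u) [Ring R] (n k : ℕ) (h : ∀ N, nwfdLE R n k N) :
    lnspGldimLE R n k :=
  fun K hK M => hK.extVanish_of_torVanish (h (charRight R M) K hK)

/-- `l.n.sp.gldim(R) ≤ w.gl.dim(R)` for any `n`. -/
theorem stmt19 (R : Type u) [Ring R] (n : ℕ) :
    ∀ k, wGldimLE R k → lnspGldimLE R n k :=
  fun k hw => stmt19_general R n k fun N K _ => hw N K
end
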